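/- Let 0 < a ≤ 1. Then for Lebesgue-almost every z₀ ∈ [-a, 2], the orbit z_t = f_a^{(t)}(z₀) converges to 0, i.e., lim_{t→∞} z_t = 0. Moreover, if 0 < a ≤ 2√2 - 2, then for Lebesgue-almost every z₀ ∈ [-a, 2] the sequence {|z_t|} is decreasing, i.e., |z_{t+1}| ≤ |z_t| for all t. -/

import Mathlib

/-!
Apart from a countable set of starting points, every orbit converges to `0`.

The identities `f(z) + a = (z + a)(z - 1)²` and `f(z) - 2 = (z - 2)(z² + a z + 1)` show that
`[-a, 2]` is invariant, and `f(z) - z = z (z + a)(z - 2)` that the fixed points are `-a, 0, 2`.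

* On `[1, 2)` we have `f(z) < z`, and there is no fixed point, so every orbit starting below `2` drops below `1`
  (`exists_lt_one`).
* On the invariant interval `(-a, 1)` every orbit tends to `0` (`tendsto_of_mem_Ioo`), by means of
  the Lyapunov function `max (-z, -f(z), a z)`, which decreases strictly over two steps
  away from `0` (`lyap_two_lt`). This also covers the parabolic case `a = 1`, where `f'(0) = -1`.

The only exceptions are therefore `2` and the iterated preimages of `-a`, a countable set because
the fibres of a nonconstant polynomial are finite. For `a ≤ 2√2 - 2` the multiplier `f(z)/z` lies in
`[-1, 1]` on `[-a, 2]`, which gives the monotonicity of `|z_t|` for every starting point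
(`abs_fa_le`).
-/
open MeasureTheory Filter

/-- The cubic map `f_a(z) = z * g_a(z)` with `g_a(z) = z^2 + (a-2)z + 1 - 2a`. -/
noncomputable def fa (a z : ℝ) : ℝ := z * (z ^ 2 + (a - 2) * z + 1 - 2 * a)

/-! ### Elementary properties of the map -/

lemma fa_add (a z : ℝ) : fa a z + a = (z + a) * (z - 1) ^ 2 := by
  unfold fa; ring

lemma fa_sub_two (a z : ℝ) : fa a z - 2 = (z - 2) * (z ^ 2 + a * z + 1) := by
  unfold fa; ring

lemma fa_sub_self (a z : ℝ) : fa a z - z = z * ((z + a) * (z - 2)) := by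
  unfold fa; ring

lemma continuous_fa (a : ℝ) : Continuous (fa a) := by
  unfold fa; fun_prop

lemma quad_pos {a : ℝ} (ha₀ : 0 < a) (ha₁ : a ≤ 1) (z : ℝ) : 0 < z ^ 2 + a * z + 1 := by
  nlinarith [sq_nonneg (2 * z + a)]

lemma fa_mem_Icc {a z : ℝ} (ha₀ : 0 < a) (ha₁ : a ≤ 1) (hz : z ∈ Set.Icc (-a) 2) :
    fa a z ∈ Set.Icc (-a) 2 := by
  have h1 := fa_add a z
  have h2 := fa_sub_two a z
  have h3 : 0 ≤ (z + a) * (z - 1) ^ 2 := mul_nonneg (by linarith [hz.1]) (sq_nonneg _)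
  have h4 : (z - 2) * (z ^ 2 + a * z + 1) ≤ 0 :=
    mul_nonpos_of_nonpos_of_nonneg (by linarith [hz.2]) (quad_pos ha₀ ha₁ z).le
  constructor <;> linarith

/-! ### The interval `(-a, 1)` -/

lemma lt_fa_of_neg {a z : ℝ} (h1 : -a < z) (h2 : z < 0) : z < fa a z := by
  have h := fa_sub_self a z
  have h3 : 0 < z * ((z + a) * (z - 2)) :=
    mul_pos_of_neg_of_neg h2 (mul_neg_of_pos_of_neg (by linarith) (by linarith))
  linarith

lemma fa_lt_neg_of_neg {a z : ℝ} (ha₁ : a ≤ 1) (h2 : z < 0) : fa a z < -z := by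
  have h : fa a z + z = z * (z ^ 2 + (a - 2) * z + (2 - 2 * a)) := by unfold fa; ring
  have h3 : 0 < z ^ 2 + (a - 2) * z + (2 - 2 * a) := by nlinarith
  nlinarith [mul_neg_of_neg_of_pos h2 h3]

lemma fa_lt_of_pos {a z : ℝ} (ha₀ : 0 < a) (h1 : 0 < z) (h2 : z < 2) : fa a z < z := by
  have h := fa_sub_self a z
  have h3 : z * ((z + a) * (z - 2)) < 0 :=
    mul_neg_of_pos_of_neg h1 (mul_neg_of_pos_of_neg (by linarith) (by linarith))
  linarith

lemma fa_mem_Ioo {a z : ℝ} (ha₀ : 0 < a) (ha₁ : a ≤ 1) (hz : z ∈ Set.Ioo (-a) 1) :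
    fa a z ∈ Set.Ioo (-a) 1 := by
  obtain ⟨h1, h2⟩ := hz
  constructor
  · have h := fa_add a z
    have h3 : 0 < (z + a) * (z - 1) ^ 2 :=
      mul_pos (by linarith) (sq_pos_of_neg (by linarith))
    linarith
  · rcases lt_trichotomy z 0 with h | h | h
    · linarith [fa_lt_neg_of_neg ha₁ h]
    · subst h; simp [fa]
    · linarith [fa_lt_of_pos ha₀ h (by linarith)]

/-- A negative point whose image is positive returns to the right of itself after two steps: with
`s = -z`, the quotient `f(z)/z` is negative and at least `-(1 - s)`, while `f²(z)/f(z)` is at least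
`-(1 + s)`, so that `f²(z)/z < 1`. This excludes cycles of period two in `(-a, 1)`. -/
lemma lt_fa_fa {a z : ℝ} (ha₁ : a ≤ 1) (h1 : -a < z) (h2 : z < 0)
    (h3 : 0 < fa a z) : z < fa a (fa a z) := by
  have hy : fa a z < -z := fa_lt_neg_of_neg ha₁ h2
  have hf : fa a z = z * (z ^ 2 + (a - 2) * z + 1 - 2 * a) := rfl
  have hff : fa a (fa a z)
      = fa a z * ((fa a z) ^ 2 + (a - 2) * fa a z + 1 - 2 * a) := rfl
  generalize fa a z = y at *
  rw [hff]
  have hg1 : -(1 + z) ≤ z ^ 2 + (a - 2) * z + 1 - 2 * a := by nlinarith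
  have hg2 : -(1 - z) ≤ y ^ 2 + (a - 2) * y + 1 - 2 * a := by nlinarith
  have hy1 : y ≤ -z * (1 + z) := by nlinarith
  nlinarith [mul_nonneg h3.le (by linarith : 0 ≤ y ^ 2 + (a - 2) * y + 1 - 2 * a + (1 - z)),
    mul_nonneg (by linarith : (0:ℝ) ≤ 1 - z) (by linarith : 0 ≤ -z * (1 + z) - y),
    mul_pos_of_neg_of_neg h2 h2, mul_neg_of_pos_of_neg (mul_pos_of_neg_of_neg h2 h2) h2]

/-- The positive-to-positive case, which occurs only for `a < 1/2`. -/
lemma neg_fa_fa_lt {a z : ℝ} (ha₀ : 0 < a) (h1 : 0 < z) (h2 : z < 1) (ha₁ : a ≤ 1)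
    (h3 : 0 < fa a z) : -fa a (fa a z) < a * z := by
  have hf : fa a z = z * (z ^ 2 + (a - 2) * z + 1 - 2 * a) := rfl
  have hff : fa a (fa a z)
      = fa a z * ((fa a z) ^ 2 + (a - 2) * fa a z + 1 - 2 * a) := rfl
  generalize fa a z = y at *
  rw [hff]
  have hy : y ≤ z * (1 - 2 * a) := by
    rw [hf]; apply mul_le_mul_of_nonneg_left _ h1.le; nlinarith
  have hg : -(a + a ^ 2 / 4) ≤ y ^ 2 + (a - 2) * y + 1 - 2 * a := by
    nlinarith [sq_nonneg (2 * y + a - 2)]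
  have e1 : -(y * (y ^ 2 + (a - 2) * y + 1 - 2 * a)) ≤ y * (a + a ^ 2 / 4) := by
    nlinarith [mul_le_mul_of_nonneg_left hg h3.le]
  have e2 : y * (a + a ^ 2 / 4) ≤ z * (1 - 2 * a) * (a + a ^ 2 / 4) :=
    mul_le_mul_of_nonneg_right hy (by positivity)
  have e3 : z * (1 - 2 * a) * (a + a ^ 2 / 4) = a * z - z * (7 / 4 * a ^ 2 + a ^ 3 / 2) := by ring
  have e4 : 0 < z * (7 / 4 * a ^ 2 + a ^ 3 / 2) := by positivity
  linarith

/-- A Lyapunov function for `fa a` on `(-a, 1)`. The term `-fa a z` accounts for positive points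
which the map sends further away from `0`; the weight `a` on the positive side makes every sublevel
set below `a` a compact subset of `(-a, 1)`. -/
noncomputable def lyap (a z : ℝ) : ℝ := max (max (-z) (-fa a z)) (a * z)

lemma continuous_lyap (a : ℝ) : Continuous (lyap a) := by
  have := continuous_fa a
  unfold lyap; fun_prop

lemma lyap_step {a z : ℝ} (ha₀ : 0 < a) (ha₁ : a ≤ 1) (hz : z ∈ Set.Ioo (-a) 1) (h0 : z ≠ 0) :
    lyap a (fa a z) ≤ lyap a z ∧ (z < 0 ∨ 0 ≤ fa a z → lyap a (fa a z) < lyap a z) := by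
  obtain ⟨v1, v2, v3⟩ : -z ≤ lyap a z ∧ -fa a z ≤ lyap a z ∧ a * z ≤ lyap a z :=
    ⟨le_max_of_le_left (le_max_left _ _), le_max_of_le_left (le_max_right _ _), le_max_right _ _⟩
  have hI := fa_mem_Ioo ha₀ ha₁ hz
  have hv : 0 < lyap a z := by
    rcases lt_or_gt_of_ne h0 with h | h
    · linarith
    · linarith [mul_pos ha₀ h]
  have p1 : z < 0 ∨ 0 ≤ fa a z → -fa a z < lyap a z := by
    rintro (h | h)
    · linarith [lt_fa_of_neg hz.1 h]
    · linarith
  have p2 : -fa a (fa a z) < lyap a z := by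
    rcases lt_trichotomy (fa a z) 0 with h | h | h
    · linarith [lt_fa_of_neg hI.1 h]
    · rw [h]; simpa [fa] using hv
    · rcases lt_or_gt_of_ne h0 with h' | h'
      · linarith [lt_fa_fa ha₁ hz.1 h' h]
      · linarith [neg_fa_fa_lt ha₀ h' hz.2 ha₁ h]
  have p3 : a * fa a z < lyap a z := by
    rcases lt_or_gt_of_ne h0 with h' | h'
    · have := fa_lt_neg_of_neg ha₁ h'
      nlinarith
    · have := fa_lt_of_pos ha₀ h' (by linarith [hz.2])
      nlinarith
  exact ⟨max_le (max_le v2 p2.le) p3.le, fun h => max_lt (max_lt (p1 h) p2) p3⟩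

lemma lyap_le {a z : ℝ} (ha₀ : 0 < a) (ha₁ : a ≤ 1) (hz : z ∈ Set.Ioo (-a) 1) :
    lyap a (fa a z) ≤ lyap a z := by
  by_cases h0 : z = 0
  · subst h0; simp [fa]
  · exact (lyap_step ha₀ ha₁ hz h0).1

/-- One step need not decrease the Lyapunov function strictly (a positive point with negative image
can keep its value), but two steps do. -/
lemma lyap_two_lt {a z : ℝ} (ha₀ : 0 < a) (ha₁ : a ≤ 1) (hz : z ∈ Set.Ioo (-a) 1) (h0 : z ≠ 0) :
    lyap a (fa a (fa a z)) < lyap a z := by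
  have hI := fa_mem_Ioo ha₀ ha₁ hz
  obtain ⟨h1, h2⟩ := lyap_step ha₀ ha₁ hz h0
  rcases lt_or_ge (fa a z) 0 with h | h
  · exact ((lyap_step ha₀ ha₁ hI h.ne).2 (Or.inl h)).trans_le h1
  · exact (lyap_le ha₀ ha₁ hI).trans_lt (h2 (Or.inr h))

lemma eq_of_mapClusterPt {u : ℕ → ℝ} {x y : ℝ} (h : MapClusterPt x atTop u)
    (hu : Tendsto u atTop (nhds y)) : x = y :=
  eq_of_nhds_neBot (NeBot.mono h (inf_le_inf_left _ hu))

/-- The interval `(-a, 1)` lies in the basin of attraction of `0`. Every cluster point of the orbit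
has the same Lyapunov value as its second iterate, hence is `0`. -/
lemma tendsto_of_mem_Ioo {a z : ℝ} (ha₀ : 0 < a) (ha₁ : a ≤ 1) (hz : z ∈ Set.Ioo (-a) 1) :
    Tendsto (fun t : ℕ => (fa a)^[t] z) atTop (nhds 0) := by
  have hI : ∀ t : ℕ, (fa a)^[t] z ∈ Set.Ioo (-a) 1 := by
    intro t
    induction t with
    | zero => exact hz
    | succ t ih => rw [Function.iterate_succ_apply']; exact fa_mem_Ioo ha₀ ha₁ ih
  have hanti : Antitone (fun t : ℕ => lyap a ((fa a)^[t] z)) := by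
    refine antitone_nat_of_succ_le fun t => ?_
    rw [Function.iterate_succ_apply']
    exact lyap_le ha₀ ha₁ (hI t)
  have hlt : lyap a z < a := by
    have := (fa_mem_Ioo ha₀ ha₁ hz).1
    refine max_lt (max_lt (by linarith [hz.1]) (by linarith)) ?_
    nlinarith [hz.2]
  have hcomp : IsCompact (Set.Icc (-a) 1 ∩ {x | lyap a x ≤ lyap a z}) :=
    isCompact_Icc.inter_right (isClosed_le (continuous_lyap a) continuous_const)
  have hbdd : BddBelow (Set.range (fun t : ℕ => lyap a ((fa a)^[t] z))) := by
    refine ⟨-1, ?_⟩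
    rintro _ ⟨t, rfl⟩
    have h : -(fa a)^[t] z ≤ lyap a ((fa a)^[t] z) := le_max_of_le_left (le_max_left _ _)
    have := (hI t).2
    simp only
    linarith
  have hlim := tendsto_atTop_ciInf hanti hbdd
  refine hcomp.tendsto_nhds_of_unique_mapClusterPt
    (Eventually.of_forall fun t => ⟨Set.Ioo_subset_Icc_self (hI t), hanti (Nat.zero_le t)⟩) ?_
  intro p hp hcl
  by_contra h0
  have hpI : p ∈ Set.Ioo (-a) 1 := by
    have hp2 : lyap a p ≤ lyap a z := hp.2
    have h1 : -p ≤ lyap a p := le_max_of_le_left (le_max_left _ _)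
    have h2 : a * p ≤ lyap a p := le_max_right _ _
    constructor
    · linarith
    · by_contra! h; nlinarith
  have hc1 : Continuous (lyap a) := continuous_lyap a
  have hc2 : Continuous (fun x => lyap a (fa a (fa a x))) :=
    hc1.comp ((continuous_fa a).comp (continuous_fa a))
  have e1 := eq_of_mapClusterPt (hcl.continuousAt_comp hc1.continuousAt) hlim
  have hlim2 : Tendsto (fun t : ℕ => lyap a (fa a (fa a ((fa a)^[t] z)))) atTop
      (nhds (⨅ t : ℕ, lyap a ((fa a)^[t] z))) := by
    have := (tendsto_add_atTop_iff_nat 2).2 hlim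
    refine this.congr fun t => ?_
    rw [Function.iterate_succ_apply', Function.iterate_succ_apply']
  have e2 := eq_of_mapClusterPt (hcl.continuousAt_comp hc2.continuousAt) hlim2
  have := lyap_two_lt ha₀ ha₁ hpI h0
  linarith

/-! ### Orbits leave `[1, 2)`, and the exceptional set is countable -/

/-- On `[1, 2)` the map decreases every point and has no fixed point there. -/
lemma exists_lt_one {a z : ℝ} (ha₀ : 0 < a) (hz : z < 2) :
    ∃ t : ℕ, (fa a)^[t] z < 1 := by
  by_contra! h
  have hle : ∀ t : ℕ, (fa a)^[t] z ≤ z ∧ (fa a)^[t + 1] z ≤ (fa a)^[t] z := by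
    intro t
    induction t with
    | zero =>
      have h1 : 1 ≤ z := h 0
      exact ⟨le_rfl, (fa_lt_of_pos ha₀ (by linarith) hz).le⟩
    | succ t ih =>
      have h1 := ih.2.trans ih.1
      refine ⟨h1, ?_⟩
      rw [Function.iterate_succ_apply' _ (t + 1)]
      exact (fa_lt_of_pos ha₀ (by linarith [h (t + 1)]) (by linarith)).le
  have hanti : Antitone (fun t : ℕ => (fa a)^[t] z) := antitone_nat_of_succ_le fun t => (hle t).2
  have hlim := tendsto_atTop_ciInf hanti ⟨1, by rintro _ ⟨t, rfl⟩; exact h t⟩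
  have hfix := isFixedPt_of_tendsto_iterate hlim (continuous_fa a).continuousAt
  have hL1 := ge_of_tendsto' hlim h
  have hL2 := le_of_tendsto' hlim fun t => (hle t).1
  have := fa_lt_of_pos ha₀ (by linarith) (hL2.trans_lt hz)
  exact this.ne hfix

lemma finite_fiber (a c : ℝ) : {z : ℝ | fa a z = c}.Finite := by
  have hne : (Polynomial.X ^ 3 + Polynomial.C (a - 2) * Polynomial.X ^ 2
      + Polynomial.C (1 - 2 * a) * Polynomial.X - Polynomial.C c : Polynomial ℝ) ≠ 0 := by
    apply Polynomial.Monic.ne_zero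
    monicity!
  refine (Polynomial.finite_setOfPred_isRoot hne).subset fun z hz => ?_
  have hz' : fa a z = c := hz
  simp only [Set.mem_ofPred_eq, Polynomial.IsRoot.def, Polynomial.eval_sub, Polynomial.eval_add,
    Polynomial.eval_mul, Polynomial.eval_pow, Polynomial.eval_X, Polynomial.eval_C]
  rw [← hz']; unfold fa; ring

lemma countable_iterate_fiber (a c : ℝ) (t : ℕ) : {z : ℝ | (fa a)^[t] z = c}.Countable := by
  induction t generalizing c with
  | zero => simp
  | succ t ih =>
    have : {z : ℝ | (fa a)^[t + 1] z = c} = ⋃ w ∈ {w : ℝ | fa a w = c}, {z | (fa a)^[t] z = w} := by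
      ext z; simp [Function.iterate_succ_apply']
    rw [this]
    exact (finite_fiber a c).countable.biUnion fun w _ => ih w

/-- If an orbit starting in `[-a, 2)` never hits the repelling fixed point `-a`, it enters `(-a, 1)`
and hence converges to `0`. -/
lemma tendsto_of_ne {a z : ℝ} (ha₀ : 0 < a) (ha₁ : a ≤ 1) (hz : z ∈ Set.Icc (-a) 2) (h2 : z ≠ 2)
    (hne : ∀ t : ℕ, (fa a)^[t] z ≠ -a) :
    Tendsto (fun t : ℕ => (fa a)^[t] z) atTop (nhds 0) := by
  obtain ⟨n, hn⟩ := exists_lt_one ha₀ (lt_of_le_of_ne hz.2 h2)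
  have hmem := (show Set.MapsTo (fa a) (Set.Icc (-a) 2) (Set.Icc (-a) 2) from
    fun x hx => fa_mem_Icc ha₀ ha₁ hx).iterate n hz
  have hlim := tendsto_of_mem_Ioo ha₀ ha₁ ⟨lt_of_le_of_ne hmem.1 (hne n).symm, hn⟩
  rw [← tendsto_add_atTop_iff_nat n]
  exact hlim.congr fun t => (Function.iterate_add_apply _ t n z).symm

/-- For `a ≤ 2√2 - 2` the multiplier `(z + a)(z - 2) + 1` has absolute value at most `1` on all of
`[-a, 2]`; its minimum is `1 - (a + 2)² / 4`. -/
lemma abs_fa_le {a z : ℝ} (ha₀ : 0 < a) (ha : a ≤ 2 * Real.sqrt 2 - 2)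
    (hz : z ∈ Set.Icc (-a) 2) : |fa a z| ≤ |z| := by
  have hs : (a + 2) ^ 2 ≤ 8 := by
    nlinarith [Real.sq_sqrt (show (0 : ℝ) ≤ 2 by norm_num), Real.sqrt_nonneg 2]
  have hg : |z ^ 2 + (a - 2) * z + 1 - 2 * a| ≤ 1 := by
    rw [abs_le]
    constructor
    · nlinarith [sq_nonneg (2 * z + a - 2)]
    · nlinarith [mul_nonneg (by linarith [hz.1] : 0 ≤ z + a) (by linarith [hz.2] : 0 ≤ 2 - z)]
  unfold fa
  rw [abs_mul]
  exact mul_le_of_le_one_right (abs_nonneg z) hg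

/-- For `0 < a ≤ 1`, for Lebesgue-almost every `z₀ ∈ [-a, 2]` the orbit
`z_t = f_a^{(t)}(z₀)` converges to `0`; moreover if `0 < a ≤ 2√2 - 2` then for
Lebesgue-almost every `z₀ ∈ [-a, 2]` the sequence `|z_t|` is decreasing. -/
theorem cubic_ae_convergence (a : ℝ) (ha₀ : 0 < a) (ha₁ : a ≤ 1) :
    (∀ᵐ z₀ ∂(volume.restrict (Set.Icc (-a) (2 : ℝ))),
      Tendsto (fun t : ℕ => (fa a)^[t] z₀) atTop (nhds 0)) ∧
    (a ≤ 2 * Real.sqrt 2 - 2 →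
      ∀ᵐ z₀ ∂(volume.restrict (Set.Icc (-a) (2 : ℝ))),
        ∀ t : ℕ, |(fa a)^[t + 1] z₀| ≤ |(fa a)^[t] z₀|) := by
  refine ⟨?_, fun ha => ?_⟩
  · have hE : ({2} ∪ ⋃ t : ℕ, {z : ℝ | (fa a)^[t] z = -a}).Countable :=
      (Set.countable_singleton 2).union
        (Set.countable_iUnion fun t => countable_iterate_fiber a (-a) t)
    have hae : ∀ᵐ z ∂(volume.restrict (Set.Icc (-a) (2 : ℝ))),
        z ∉ ({2} ∪ ⋃ t : ℕ, {z : ℝ | (fa a)^[t] z = -a}) :=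
      ae_restrict_of_ae (measure_eq_zero_iff_ae_notMem.1 (hE.measure_zero volume))
    filter_upwards [hae, ae_restrict_mem measurableSet_Icc] with z hz hzI
    simp only [Set.mem_union, Set.mem_singleton_iff, Set.mem_iUnion, Set.mem_ofPred_eq, not_or,
      not_exists] at hz
    exact tendsto_of_ne ha₀ ha₁ hzI hz.1 hz.2
  · filter_upwards [ae_restrict_mem measurableSet_Icc] with z hz t
    rw [Function.iterate_succ_apply']
    exact abs_fa_le ha₀ ha ((show Set.MapsTo (fa a) (Set.Icc (-a) 2) (Set.Icc (-a) 2) from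
      fun x hx => fa_mem_Icc ha₀ ha₁ hx).iterate t hz)
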